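/- Over the binary alphabet Σ = {0,1}, there exists an integer-valued Hamming compatible metric δ on Σ* that is not weakly uniform and takes values smaller than d_2: specifically, the function δ defined by δ(u,ε) = 0 if u = ε, δ(000,ε) = 1, δ(u,ε) = d_2(u,000) for all other u, and δ(u,v) = d_2(u,v) for u, v ≠ ε, is a Hamming compatible metric satisfying δ(0,ε) = 1 ≠ 2 = δ(1,ε) (so δ is not weakly uniform) and δ(000,ε) = 1 < 2 = d_2(000,ε). -/

import Mathlib

/-- The truncated Hamming function `H(ū,v̄)`: the Hamming distance between the
first `min (l u) (l v)` letters of `u` and of `v` (computed via `zip`, which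
truncates to the common length).  For words of equal length it is the usual
Hamming distance. -/
def hamming {α : Type*} [DecidableEq α] (u v : List α) : ℕ :=
  (u.zip v).countP (fun p => decide (p.1 ≠ p.2))

/-- The metric `d₂(u,v) = H(ū,v̄) + ⌈|l(u) − l(v)|/2⌉`
(note `⌈m/2⌉ = (m + 1)/2` in natural-number division). -/
def d2 {α : Type*} [DecidableEq α] (u v : List α) : ℕ :=
  hamming u v + (Nat.dist u.length v.length + 1) / 2

/-- The word `000` over the binary alphabet (with `0 = false`, `1 = true`). -/
def w000 : List Bool := [false, false, false]

/-- The metric of Example 4.11: `δ(ε,ε) = 0`, `δ(000,ε) = 1`,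
`δ(u,ε) = d₂(u,000)` for all other `u`, and `δ(u,v) = d₂(u,v)` for
`u, v ≠ ε` (extended symmetrically). -/
def delta17 (u v : List Bool) : ℕ :=
  if u = [] ∧ v = [] then 0
  else if v = [] then (if u = w000 then 1 else d2 u w000)
  else if u = [] then (if v = w000 then 1 else d2 v w000)
  else d2 u v

/-!
Off the diagonal, `δ(u,v) = max 1 (d₂(f u, f v))`, where `f` moves `ε` to `000` and fixes every
other word: `ε` becomes a twin of `000`, at distance `1` from it. Pulling back a metric along any
map keeps symmetry and the triangle inequality, and raising the distances of distinct points to at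
least `1` restores separation without breaking either. Hamming compatibility survives because `ε`
is the only word of its length.
-/

section Words

variable {α : Type*} [DecidableEq α]

@[simp]
theorem hamming_nil_left (v : List α) : hamming [] v = 0 := by
  simp [hamming]

@[simp]
theorem hamming_nil_right (u : List α) : hamming u [] = 0 := by
  simp [hamming]

theorem hamming_cons_cons (a b : α) (u v : List α) :
    hamming (a :: u) (b :: v) = hamming u v + if a = b then 0 else 1 := by
  simp [hamming, List.countP_cons]

theorem hamming_comm (u v : List α) : hamming u v = hamming v u := by
  simp only [hamming]
  rw [← List.zip_swap u v, List.countP_map]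
  simp only [Function.comp_def, Prod.fst_swap, Prod.snd_swap, ne_comm]

theorem hamming_le_min_length (u v : List α) : hamming u v ≤ min u.length v.length :=
  List.countP_le_length.trans_eq List.length_zip

theorem length_eq_and_hamming_eq_zero_iff {u v : List α} :
    u.length = v.length ∧ hamming u v = 0 ↔ u = v := by
  rw [← List.forall₂_eq_eq_eq, List.forall₂_iff_zip]
  simp [hamming, List.countP_eq_zero]

theorem d2_eq_hamming_of_length_eq {u v : List α} (h : u.length = v.length) :
    d2 u v = hamming u v := by
  simp [d2, h]

theorem d2_eq_zero_iff {u v : List α} : d2 u v = 0 ↔ u = v := by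
  rw [← length_eq_and_hamming_eq_zero_iff]
  simp only [d2, Nat.dist]
  omega

theorem d2_comm (u v : List α) : d2 u v = d2 v u := by
  rw [d2, d2, hamming_comm, Nat.dist_comm]

theorem d2_cons_cons (a b : α) (u v : List α) :
    d2 (a :: u) (b :: v) = d2 u v + if a = b then 0 else 1 := by
  simp only [d2, hamming_cons_cons, List.length_cons, Nat.dist_succ_succ]
  omega

theorem d2_le_d2_nil_add_d2_nil (u v : List α) : d2 u v ≤ d2 u [] + d2 [] v := by
  have h := hamming_le_min_length u v
  simp only [d2, hamming_nil_left, hamming_nil_right, Nat.dist, List.length_nil]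
  omega

theorem d2_nil_le_d2_nil_add (u v : List α) : d2 [] v ≤ d2 [] u + d2 u v := by
  simp only [d2, hamming_nil_left, Nat.dist, List.length_nil]
  omega

theorem d2_triangle (u v w : List α) : d2 u v ≤ d2 u w + d2 w v := by
  induction w generalizing u v with
  | nil => exact d2_le_d2_nil_add_d2_nil u v
  | cons c w ih =>
    cases u with
    | nil => exact d2_nil_le_d2_nil_add (c :: w) v
    | cons a u =>
      cases v with
      | nil =>
        rw [d2_comm (a :: u) [], d2_comm (a :: u) (c :: w), d2_comm (c :: w) [], add_comm]
        exact d2_nil_le_d2_nil_add (c :: w) (a :: u)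
      | cons b v =>
        have letter_triangle :
            (if a = b then 0 else 1) ≤ (if a = c then 0 else 1) + if c = b then 0 else 1 := by
          grind
        simp only [d2_cons_cons]
        linarith [ih u v]

end Words

section SeparatedPullback

variable {X Y : Type*} [DecidableEq X]

/-- The pullback of an integer-valued distance `d` along a map `f`, made to separate points by
raising the distance between distinct points to at least `1`. -/
def separatedPullback (d : Y → Y → ℕ) (f : X → Y) (x y : X) : ℕ :=
  if x = y then 0 else max 1 (d (f x) (f y))

variable {d : Y → Y → ℕ}

theorem separatedPullback_eq_zero_iff (f : X → Y) {x y : X} :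
    separatedPullback d f x y = 0 ↔ x = y := by
  simp only [separatedPullback]
  split_ifs with h <;> simp [h]

theorem separatedPullback_comm (hd : ∀ a b, d a b = d b a) (f : X → Y) (x y : X) :
    separatedPullback d f x y = separatedPullback d f y x := by
  simp only [separatedPullback, eq_comm (a := x), hd (f x)]

theorem separatedPullback_triangle (hd : ∀ a b c, d a b ≤ d a c + d c b) (f : X → Y) (x y z : X) :
    separatedPullback d f x y ≤ separatedPullback d f x z + separatedPullback d f z y := by
  have h := hd (f x) (f y) (f z)
  rcases eq_or_ne x z with rfl | hxz
  · simp [separatedPullback]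
  rcases eq_or_ne z y with rfl | hzy
  · simp [separatedPullback]
  simp only [separatedPullback, if_neg hxz, if_neg hzy]
  split_ifs <;> omega

theorem separatedPullback_eq_of_fixed {d : X → X → ℕ} (hd : ∀ {a b}, d a b = 0 ↔ a = b)
    {f : X → X} {x y : X} (hx : f x = x) (hy : f y = y) :
    separatedPullback d f x y = d x y := by
  rw [separatedPullback, hx, hy]
  split_ifs with h
  · exact (hd.mpr h).symm
  · exact max_eq_right (Nat.one_le_iff_ne_zero.mpr (mt hd.mp h))

end SeparatedPullback

theorem delta17_of_ne_nil {u v : List Bool} (hu : u ≠ []) (hv : v ≠ []) :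
    delta17 u v = d2 u v := by
  simp [delta17, hu, hv]

theorem delta17_comm (u v : List Bool) : delta17 u v = delta17 v u := by
  by_cases hu : u = [] <;> by_cases hv : v = [] <;> simp [delta17, hu, hv, d2_comm u v]

theorem delta17_nil_right {u : List Bool} (hu : u ≠ []) : delta17 u [] = max 1 (d2 u w000) := by
  rcases eq_or_ne u w000 with rfl | huw
  · decide
  · have : d2 u w000 ≠ 0 := mt d2_eq_zero_iff.mp huw
    simp only [delta17, hu, huw, false_and, if_true, if_false]
    omega

theorem delta17_eq_separatedPullback :
    delta17 = separatedPullback d2 (Function.update id [] w000) := by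
  have nil_right {u : List Bool} (hu : u ≠ []) :
      delta17 u [] = separatedPullback d2 (Function.update id [] w000) u [] := by
    simp [delta17_nil_right hu, separatedPullback, hu]
  funext u v
  rcases eq_or_ne u [] with rfl | hu <;> rcases eq_or_ne v [] with rfl | hv
  · simp [delta17, separatedPullback]
  · rw [delta17_comm, separatedPullback_comm d2_comm, nil_right hv]
  · exact nil_right hu
  · rw [delta17_of_ne_nil hu hv, separatedPullback_eq_of_fixed d2_eq_zero_iff
      (Function.update_of_ne hu _ _) (Function.update_of_ne hv _ _)]

theorem delta17_eq_hamming_of_length_eq {u v : List Bool} (h : u.length = v.length) :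
    delta17 u v = hamming u v := by
  rcases eq_or_ne u [] with rfl | hu
  · obtain rfl : v = [] := List.length_eq_zero_iff.mp h.symm
    simp [delta17]
  · have hv : v ≠ [] := by
      rintro rfl
      exact hu (List.length_eq_zero_iff.mp h)
    rw [delta17_of_ne_nil hu hv, d2_eq_hamming_of_length_eq h]

theorem stmt_17 :
    -- delta17 is a metric on Σ*
    (∀ u v : List Bool, delta17 u v = 0 ↔ u = v) ∧
    (∀ u v : List Bool, delta17 u v = delta17 v u) ∧
    (∀ u v w : List Bool, delta17 u v ≤ delta17 u w + delta17 w v) ∧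
    -- delta17 is Hamming compatible
    (∀ u v : List Bool, u.length = v.length → delta17 u v = hamming u v) ∧
    -- delta17 is not weakly uniform: the Hamming opposites 0 and 1 are not
    -- equidistant from ε
    delta17 [false] [] = 1 ∧ delta17 [true] [] = 2 ∧
    -- delta17 takes values smaller than d₂
    delta17 w000 [] = 1 ∧ d2 w000 ([] : List Bool) = 2 := by
  refine ⟨fun u v => ?_, delta17_comm, fun u v w => ?_,
    fun _ _ => delta17_eq_hamming_of_length_eq, by decide, by decide, by decide, by decide⟩
  · rw [delta17_eq_separatedPullback]
    exact separatedPullback_eq_zero_iff _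
  · rw [delta17_eq_separatedPullback]
    exact separatedPullback_triangle d2_triangle _ u v w
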